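/- Let N, P, M, L be positive integers with P = M + L and q = NP − L, let F ∈ ℂ^{P×M} have full column rank, h ∈ ℂ^{L+1}, σ > 0, and s ∈ ℂ^{NM}. Define the shift matrices J_l ∈ ℂ^{(NP+L)×NP} ([J_l]_{i,j} = 1 iff i − j = l), H ≜ Σ_{l=0}^{L} h_l J_l, G ≜ [0_{q×L} I_q 0_{q×L}], K ≜ G H (I_N ⊗ F), and K_l ≜ G J_l (I_N ⊗ F). Assume Kᴴ K is invertible, and let Ũ ∈ ℂ^{q×(N−1)L} satisfy Ũᴴ Ũ = I_{(N−1)L} and Ũᴴ K = 0. Let 𝒰_j be the Hankel matrix built from the j-th column of Gᴴ Ũ ([𝒰_j]_{k,i} equals entry k+i of that column) and 𝒰̃ ≜ [𝒰₀ᵀ ⋯ 𝒰_{(N−1)L−1}ᵀ]. Define the FIM blocks [J₀₀]_{ij} = (1/σ²) sᴴ K_iᴴ K_j s, the i-th row of J₀₁ as (1/σ²) sᴴ K_iᴴ K, and J₁₁ = (1/σ²) Kᴴ K. Then J₀₀ − J₀₁ J₁₁⁻¹ J₀₁ᴴ = (1/σ²) 𝒰̃ { I_{(N−1)L} ⊗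 [ (I_N ⊗ F)* s* sᵀ (I_N ⊗ F)ᵀ ] } 𝒰̃ᴴ, which is the matrix whose d-row-and-column-deleted inverse gives the closed-form CRB (38) for blind channel estimation in redundant block transmission systems. -/

import Mathlib

open Matrix
open scoped Kronecker

/-- The matrix `G = [0_{q×L} I_q 0_{q×L}]` with `q = NP - L`. -/
def Gmat (N P L : ℕ) : Matrix (Fin (N * P - L)) (Fin (N * P + L)) ℂ :=
  Matrix.of fun i j => if (j : ℕ) = (i : ℕ) + L then 1 else 0

/-- The shift matrix `J_l` with `[J_l]_{i,j} = 1` iff `i - j = l`. -/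
def shiftJ (N P L : ℕ) (l : Fin (L + 1)) : Matrix (Fin (N * P + L)) (Fin (N * P)) ℂ :=
  Matrix.of fun i j => if (i : ℕ) = (j : ℕ) + (l : ℕ) then 1 else 0

/-- The block-diagonal matrix `I_N ⊗ F : ℂ^{NP × NM}` for `F : ℂ^{P × M}`. -/
def blockF (N P M : ℕ) (hP : 0 < P) (hM : 0 < M) (F : Matrix (Fin P) (Fin M) ℂ) :
    Matrix (Fin (N * P)) (Fin (N * M)) ℂ :=
  Matrix.of fun a b =>
    if (a : ℕ) / P = (b : ℕ) / M then
      F ⟨(a : ℕ) % P, Nat.mod_lt _ hP⟩ ⟨(b : ℕ) % M, Nat.mod_lt _ hM⟩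
    else 0

/-- The Hankel matrix `𝒰_j` built from the `j`-th column of `Gᴴ Ũ`:
`[𝒰_j]_{k,i}` is entry `k + i` of that column. -/
noncomputable def hankelU (N P L r : ℕ) (Ut : Matrix (Fin (N * P - L)) (Fin r) ℂ) (j : Fin r) :
    Matrix (Fin (N * P)) (Fin (L + 1)) ℂ :=
  Matrix.of fun k i =>
    ((Gmat N P L)ᴴ * Ut) ⟨(k : ℕ) + (i : ℕ), by
      have hk := k.isLt; have hi := i.isLt; omega⟩ j

/-- The matrix `𝒰̃ = [𝒰₀ᵀ 𝒰₁ᵀ ⋯ 𝒰_{r-1}ᵀ]`, indexed by `Fin r × Fin (NP) ≃ Fin (NP·r)`. -/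
noncomputable def UtildeMat (N P L r : ℕ) (Ut : Matrix (Fin (N * P - L)) (Fin r) ℂ) :
    Matrix (Fin (L + 1)) (Fin r × Fin (N * P)) ℂ :=
  Matrix.of fun i p => hankelU N P L r Ut p.1 p.2 i

/-! Let `A` have columns `K_l s`, so that `J₀₀ = σ⁻² AᴴA`, `J₀₁ = σ⁻² AᴴK` and `J₁₁ = σ⁻² KᴴK`. The
Schur complement is then `σ⁻² Aᴴ(1 - Π)A`, where `Π` is the orthogonal projection onto the column
space of `K`, and `1 - Π = ŨŨᴴ` because `K` and `Ũ` together have as many columns as rows. So it is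
`σ⁻²` times the Gram matrix of the vectors `Ũᴴ K_l s = Ũᴴ G J_l x` with `x = (I_N ⊗ F)s`. The shift
`J_l` reads off the entries `k + l` of the columns of `GᴴŨ`, so the `j`-th entry of `Ũᴴ G J_l x` is
the conjugate of the `l`-th entry of `𝒰_jᵀ x*`, and the Gram matrix is `𝒰̃ (I ⊗ x* xᵀ) 𝒰̃ᴴ`. -/

lemma one_sub_projection_eq_mul_conjTranspose {R m n r : Type*} [CommRing R] [StarRing R]
    [Fintype m] [Fintype n] [Fintype r] [DecidableEq m] [DecidableEq n] [DecidableEq r]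
    {K : Matrix m n R} {U : Matrix m r R}
    (hcard : Fintype.card m = Fintype.card r + Fintype.card n)
    (hK : IsUnit (Kᴴ * K)) (hU : Uᴴ * U = 1) (hUK : Uᴴ * K = 0) :
    1 - K * (Kᴴ * K)⁻¹ * Kᴴ = U * Uᴴ := by
  have hKU : Kᴴ * U = 0 := by simpa using congrArg conjTranspose hUK
  have hdet : IsUnit (Kᴴ * K).det := (isUnit_iff_isUnit_det _).1 hK
  have left_inv : fromRows Uᴴ ((Kᴴ * K)⁻¹ * Kᴴ) * fromCols U K = 1 := by
    rw [fromRows_mul_fromCols, hU, hUK, Matrix.mul_assoc, Matrix.mul_assoc, hKU,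
      nonsing_inv_mul _ hdet, Matrix.mul_zero, fromBlocks_one]
  -- `[U K]` is square up to reindexing, so its left inverse is a right inverse.
  have right_inv : fromCols U K * fromRows Uᴴ ((Kᴴ * K)⁻¹ * Kᴴ) = 1 :=
    (mul_eq_one_comm_of_card_eq _ _ _ (by simpa using hcard.symm)).1 left_inv
  rw [fromCols_mul_fromRows, ← Matrix.mul_assoc] at right_inv
  exact (eq_sub_of_add_eq right_inv).symm

lemma schurComplement_smul_gram {𝕜 m n ι : Type*} [Field 𝕜] [StarRing 𝕜] [Fintype m] [Fintype n]
    [DecidableEq m] [DecidableEq n] {c : 𝕜} (hc : c ≠ 0) (hc_star : star c = c)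
    (A : Matrix m ι 𝕜) {K : Matrix m n 𝕜} (hK : IsUnit (Kᴴ * K)) :
    c • (Aᴴ * A) - c • (Aᴴ * K) * (c • (Kᴴ * K))⁻¹ * (c • (Aᴴ * K))ᴴ
      = c • (Aᴴ * (1 - K * (Kᴴ * K)⁻¹ * Kᴴ) * A) := by
  have hdet : IsUnit (Kᴴ * K).det := (isUnit_iff_isUnit_det _).1 hK
  have hinv : (c • (Kᴴ * K))⁻¹ = c⁻¹ • (Kᴴ * K)⁻¹ := inv_smul' _ (Units.mk0 c hc) hdet
  rw [hinv, conjTranspose_smul, hc_star, conjTranspose_mul, conjTranspose_conjTranspose]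
  simp only [Matrix.smul_mul, Matrix.mul_smul, smul_smul, inv_mul_cancel₀ hc, mul_one,
    Matrix.mul_sub, Matrix.sub_mul, Matrix.mul_one, smul_sub, Matrix.mul_assoc]

section ChannelJacobian

variable {R m n k ι : Type*} [Semiring R] [Fintype n]

/-- The matrix whose `l`-th column is `D l *ᵥ s`: the Jacobian, with respect to the coefficients
`h l`, of the noiseless observation `(∑ l, h l • D l) *ᵥ s`. -/
def channelJacobian (D : ι → Matrix m n R) (s : n → R) : Matrix m ι R :=
  Matrix.of fun a l => (D l *ᵥ s) a

lemma channelJacobian_mul [Fintype k] (D : ι → Matrix m k R) (B : Matrix k n R) (s : n → R) :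
    channelJacobian (fun l => D l * B) s = channelJacobian D (B *ᵥ s) := by
  simp only [channelJacobian, mulVec_mulVec]

variable [StarRing R] [Fintype m]

lemma smul_conjTranspose_channelJacobian_mul_self (c : R) (D : ι → Matrix m n R) (s : n → R) :
    c • ((channelJacobian D s)ᴴ * channelJacobian D s)
      = Matrix.of fun i j => c * (star s ⬝ᵥ ((D i)ᴴ * D j) *ᵥ s) := by
  ext i j
  rw [of_apply, ← mulVec_mulVec, dotProduct_mulVec, ← star_mulVec]
  rfl

lemma smul_conjTranspose_channelJacobian_mul (c : R) (D : ι → Matrix m n R) (K : Matrix m k R)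
    (s : n → R) :
    c • ((channelJacobian D s)ᴴ * K)
      = Matrix.of fun i j => c * (star s ᵥ* ((D i)ᴴ * K)) j := by
  ext i j
  rw [of_apply, ← vecMul_vecMul, ← star_mulVec]
  rfl

end ChannelJacobian

lemma mul_one_kronecker_vecMulVec_mul {R r k ι κ : Type*} [Semiring R] [Fintype r] [Fintype k]
    [DecidableEq r] (W : Matrix ι (r × k) R) (x y : k → R) (Z : Matrix (r × k) κ R) :
    W * ((1 : Matrix r r R) ⊗ₖ vecMulVec x y) * Z
      = (Matrix.of fun i c => ∑ a, W i (c, a) * x a) *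
          Matrix.of fun c j => ∑ b, y b * Z (c, b) j := by
  ext i j
  have entry (c : r) (b : k) : (W * ((1 : Matrix r r R) ⊗ₖ vecMulVec x y)) i (c, b)
      = (∑ a, W i (c, a) * x a) * y b := by
    simp [Matrix.mul_apply, Fintype.sum_prod_type, Matrix.one_apply, vecMulVec_apply,
      Finset.sum_mul, mul_assoc]
  rw [Matrix.mul_apply, Matrix.mul_apply, Fintype.sum_prod_type]
  simp only [entry, of_apply, Finset.mul_sum, mul_assoc]

section Hankel

variable {N P L r : ℕ}

lemma mul_shiftJ_apply {m : Type*} (A : Matrix m (Fin (N * P + L)) ℂ) (l : Fin (L + 1)) (a : m)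
    (k : Fin (N * P)) : (A * shiftJ N P L l) a k = A a ⟨k + l, by omega⟩ := by
  have val_eq_iff (j : Fin (N * P + L)) :
      (j : ℕ) = k + l ↔ j = (⟨k + l, by omega⟩ : Fin (N * P + L)) := by
    rw [Fin.ext_iff]
  simp [Matrix.mul_apply, shiftJ, val_eq_iff]

lemma UtildeMat_apply (Ut : Matrix (Fin (N * P - L)) (Fin r) ℂ) (l : Fin (L + 1)) (j : Fin r)
    (k : Fin (N * P)) :
    UtildeMat N P L r Ut l (j, k) = star ((Utᴴ * (Gmat N P L * shiftJ N P L l)) j k) := by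
  rw [← Matrix.mul_assoc, mul_shiftJ_apply, ← conjTranspose_apply, conjTranspose_mul,
    conjTranspose_conjTranspose]
  rfl

lemma UtildeMat_mul_one_kronecker_mul_conjTranspose (Ut : Matrix (Fin (N * P - L)) (Fin r) ℂ)
    (x : Fin (N * P) → ℂ) :
    UtildeMat N P L r Ut * ((1 : Matrix (Fin r) (Fin r) ℂ) ⊗ₖ vecMulVec (star x) x)
        * (UtildeMat N P L r Ut)ᴴ
      = (channelJacobian (fun l => Gmat N P L * shiftJ N P L l) x)ᴴ * (Ut * Utᴴ)
          * channelJacobian (fun l => Gmat N P L * shiftJ N P L l) x := by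
  set A := channelJacobian (fun l => Gmat N P L * shiftJ N P L l) x
  have entry (j : Fin r) (l : Fin (L + 1)) :
      (Utᴴ * A) j l = ∑ k, (Utᴴ * (Gmat N P L * shiftJ N P L l)) j k * x k :=
    congrFun (mulVec_mulVec x Utᴴ (Gmat N P L * shiftJ N P L l)) j
  have hright : (Matrix.of fun j l => ∑ k, x k * (UtildeMat N P L r Ut)ᴴ (j, k) l) = Utᴴ * A := by
    ext j l
    simp only [of_apply, conjTranspose_apply, UtildeMat_apply, star_star, entry, mul_comm]
  have hleft : (Matrix.of fun l j => ∑ k, UtildeMat N P L r Ut l (j, k) * star x k)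
      = (Utᴴ * A)ᴴ := by
    ext l j
    simp only [of_apply, conjTranspose_apply, UtildeMat_apply, entry, star_sum, star_mul',
      Pi.star_apply]
  rw [mul_one_kronecker_vecMulVec_mul, hleft, hright, conjTranspose_mul,
    conjTranspose_conjTranspose]
  simp only [Matrix.mul_assoc]

end Hankel

/-- The matrix `K_l = G J_l B` through which the `l`-th channel tap acts on the symbols, for an
arbitrary precoder `B` in place of `I_N ⊗ F`. -/
def tapMatrix {n : Type*} (N P L : ℕ) (B : Matrix (Fin (N * P)) n ℂ) (l : Fin (L + 1)) :
    Matrix (Fin (N * P - L)) n ℂ :=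
  Gmat N P L * shiftJ N P L l * B

/-- The matrix `K = G H B`, `H = ∑ l, h l • J_l`, sending the symbols to the noiseless observation,
for an arbitrary precoder `B` in place of `I_N ⊗ F`. -/
def channelMatrix {n : Type*} (N P L : ℕ) (h : Fin (L + 1) → ℂ) (B : Matrix (Fin (N * P)) n ℂ) :
    Matrix (Fin (N * P - L)) n ℂ :=
  Gmat N P L * (∑ l, h l • shiftJ N P L l) * B

theorem blind_channel_CRB_closed_form_general {n : Type*} [Fintype n] [DecidableEq n]
    {N P L r : ℕ} (hcard : N * P - L = r + Fintype.card n)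
    (B : Matrix (Fin (N * P)) n ℂ) (h : Fin (L + 1) → ℂ) {σ : ℝ} (hσ : 0 < σ) (s : n → ℂ)
    (hK : IsUnit ((channelMatrix N P L h B)ᴴ * channelMatrix N P L h B))
    {Ut : Matrix (Fin (N * P - L)) (Fin r) ℂ} (hU : Utᴴ * Ut = 1)
    (hUK : Utᴴ * channelMatrix N P L h B = 0) :
    (Matrix.of fun i j =>
        (1 / (σ : ℂ) ^ 2) * (star s ⬝ᵥ ((tapMatrix N P L B i)ᴴ * tapMatrix N P L B j) *ᵥ s))
      - (Matrix.of fun i j =>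
          (1 / (σ : ℂ) ^ 2) * (star s ᵥ* ((tapMatrix N P L B i)ᴴ * channelMatrix N P L h B)) j)
        * ((1 / (σ : ℂ) ^ 2) • ((channelMatrix N P L h B)ᴴ * channelMatrix N P L h B))⁻¹
        * (Matrix.of fun i j =>
            (1 / (σ : ℂ) ^ 2) * (star s ᵥ* ((tapMatrix N P L B i)ᴴ * channelMatrix N P L h B)) j)ᴴ
    = (1 / (σ : ℂ) ^ 2) •
        (UtildeMat N P L r Ut
          * ((1 : Matrix (Fin r) (Fin r) ℂ) ⊗ₖ vecMulVec (star (B *ᵥ s)) (B *ᵥ s))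
          * (UtildeMat N P L r Ut)ᴴ) := by
  have hσ_ne : (1 / (σ : ℂ) ^ 2) ≠ 0 := by simp [hσ.ne']
  have hσ_star : star (1 / (σ : ℂ) ^ 2) = 1 / (σ : ℂ) ^ 2 := by simp
  have hjac : channelJacobian (tapMatrix N P L B) s
      = channelJacobian (fun l => Gmat N P L * shiftJ N P L l) (B *ᵥ s) :=
    channelJacobian_mul _ B s
  rw [← smul_conjTranspose_channelJacobian_mul_self, ← smul_conjTranspose_channelJacobian_mul,
    schurComplement_smul_gram hσ_ne hσ_star _ hK,
    one_sub_projection_eq_mul_conjTranspose (by simpa using hcard) hK hU hUK,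
    UtildeMat_mul_one_kronecker_mul_conjTranspose, hjac]

lemma mul_add_sub_eq_pred_mul_add_mul (N M L : ℕ) :
    N * (M + L) - L = (N - 1) * L + N * M := by
  cases N with
  | zero => simp
  | succ n => rw [Nat.add_sub_cancel, Nat.sub_eq_of_eq_add]; ring

/-- **The closed-form CRB computation (38)/(52) for blind channel estimation in
redundant block transmission systems**: with `K = G H (I_N ⊗ F)`,
`K_l = G J_l (I_N ⊗ F)`, FIM blocks `[J₀₀]_{ij} = (1/σ²) sᴴ K_iᴴ K_j s`, `i`-th
row of `J₀₁` equal to `(1/σ²) sᴴ K_iᴴ K`, `J₁₁ = (1/σ²) Kᴴ K`, and `Ũ` an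
orthonormal basis of the left null space of `K`, the Schur complement
`J₀₀ - J₀₁ J₁₁⁻¹ J₀₁ᴴ` equals
`(1/σ²) 𝒰̃ {I_{(N-1)L} ⊗ [(I_N ⊗ F)* s* sᵀ (I_N ⊗ F)ᵀ]} 𝒰̃ᴴ`. -/
theorem blind_channel_CRB_closed_form
    (N P M L : ℕ) (hN : 0 < N) (hP : 0 < P) (hM : 0 < M) (hL : 0 < L)
    (hPML : P = M + L)
    (F : Matrix (Fin P) (Fin M) ℂ) (hF : F.rank = M)
    (h : Fin (L + 1) → ℂ) (σ : ℝ) (hσ : 0 < σ) (s : Fin (N * M) → ℂ)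
    (Ksh : Fin (L + 1) → Matrix (Fin (N * P - L)) (Fin (N * M)) ℂ)
    (hKsh : ∀ l, Ksh l = Gmat N P L * shiftJ N P L l * blockF N P M hP hM F)
    (Kmat : Matrix (Fin (N * P - L)) (Fin (N * M)) ℂ)
    (hKmat : Kmat = Gmat N P L * (∑ l, h l • shiftJ N P L l) * blockF N P M hP hM F)
    (hKinv : IsUnit (Kmatᴴ * Kmat))
    (Ut : Matrix (Fin (N * P - L)) (Fin ((N - 1) * L)) ℂ)
    (hUorth : Utᴴ * Ut = 1)
    (hUK : Utᴴ * Kmat = 0) :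
    (Matrix.of fun (i j : Fin (L + 1)) =>
        (1 / (σ : ℂ) ^ 2) * (star s ⬝ᵥ ((Ksh i)ᴴ * Ksh j) *ᵥ s))
      - (Matrix.of fun (i : Fin (L + 1)) (j : Fin (N * M)) =>
          (1 / (σ : ℂ) ^ 2) * (star s ᵥ* ((Ksh i)ᴴ * Kmat)) j)
        * ((1 / (σ : ℂ) ^ 2) • (Kmatᴴ * Kmat))⁻¹
        * (Matrix.of fun (i : Fin (L + 1)) (j : Fin (N * M)) =>
            (1 / (σ : ℂ) ^ 2) * (star s ᵥ* ((Ksh i)ᴴ * Kmat)) j)ᴴ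
    = (1 / (σ : ℂ) ^ 2) •
        (UtildeMat N P L ((N - 1) * L) Ut
          * ((1 : Matrix (Fin ((N - 1) * L)) (Fin ((N - 1) * L)) ℂ) ⊗ₖ
              Matrix.of fun a b =>
                star ((blockF N P M hP hM F *ᵥ s) a) * (blockF N P M hP hM F *ᵥ s) b)
          * (UtildeMat N P L ((N - 1) * L) Ut)ᴴ) := by
  obtain rfl : Ksh = tapMatrix N P L (blockF N P M hP hM F) := funext hKsh
  subst hKmat
  exact blind_channel_CRB_closed_form_general
    (by rw [hPML, mul_add_sub_eq_pred_mul_add_mul, Fintype.card_fin]) _ h hσ s hKinv hUorth hUK
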